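/- For every ε > 0, the probability under P_3D,q of the set of plane partitions π satisfying |(−ln q)³ · |π| − 2ζ(3)| > ε tends to 0 as q → 1⁻. (That is, (−ln q)³ |π| → 2ζ(3) in probability as q → 1.) -/

import Mathlib

open Filter Topology
open scoped Classical

/-- A plane partition: an array `(π_{ij})_{i,j ≥ 1}` of nonnegative integers,
nonincreasing in `i` and in `j`, with finitely many nonzero entries.
`part i j` is the entry `π_{i+1, j+1}`. -/
structure PlanePartition : Type where
  part : ℕ → ℕ → ℕ
  antitone_fst : ∀ ⦃i i' : ℕ⦄ (j : ℕ), i ≤ i' → part i' j ≤ part i j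
  antitone_snd : ∀ (i : ℕ) ⦃j j' : ℕ⦄, j ≤ j' → part i j' ≤ part i j
  finite_support : (Function.support fun p : ℕ × ℕ => part p.1 p.2).Finite

/-- The volume `|π| = Σ_{i,j} π_{ij}` of a plane partition. -/
noncomputable def PlanePartition.size (π : PlanePartition) : ℕ :=
  ∑' p : ℕ × ℕ, π.part p.1 p.2

/-!
Read along its diagonals, a plane partition is a partition `l` (the main diagonal) from which two
chains of interlacing partitions descend to the empty one. Summing `q ^ |π|` over each chain gives a
principally specialized Schur function, so the generating function of plane partitions in a box is
`∑ₗ s_l(q, q², …) s_l(1, q, …)`. The Cauchy identity, which follows from the commutation relation of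
the vertex operators `Γ₊` and `Γ₋`, evaluates it as `∏ (1 - q ^ (i + j + 1))⁻¹`, and letting the box
grow yields MacMahon's formula.

Write `q = e⁻ʳ` and let `F r` be the logarithm of MacMahon's product. Expanding the logarithms gives
`r² F r = ∑ k⁻³ ((kr/2) / sinh (kr/2))²`, which tends to `ζ(3)` by dominated convergence. Hence
`F r ∼ ζ(3) r⁻²`, whose derivative predicts `|π| ≈ 2 ζ(3) r⁻³`. As the exponential moments of `|π|`
are the ratios `exp (F ((1 - d) r) - F r)`, Chernoff's bound makes the probability of a deviation of
order `r⁻³` smaller than `exp (-c r⁻²)`.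
-/

open scoped ENNReal

section Interlacing

/-- The sequence `a, l 0, l 1, …`. -/
noncomputable def seqCons (a : ℕ) (l : ℕ →₀ ℕ) : ℕ →₀ ℕ :=
  Finsupp.single 0 a + l.mapDomain Nat.succ

/-- The sequence `l 1, l 2, …`. -/
noncomputable def seqTail (l : ℕ →₀ ℕ) : ℕ →₀ ℕ :=
  l.comapDomain Nat.succ Nat.succ_injective.injOn

@[simp]
lemma seqCons_zero (a : ℕ) (l : ℕ →₀ ℕ) : seqCons a l 0 = a := by
  simp [seqCons, Finsupp.mapDomain_of_notMem_range]

@[simp]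
lemma seqCons_succ (a : ℕ) (l : ℕ →₀ ℕ) (i : ℕ) : seqCons a l (i + 1) = l i := by
  simp [seqCons, Finsupp.mapDomain_apply Nat.succ_injective l i]

@[simp]
lemma seqTail_apply (l : ℕ →₀ ℕ) (i : ℕ) : seqTail l i = l (i + 1) := rfl

@[simp]
lemma seqTail_seqCons (a : ℕ) (l : ℕ →₀ ℕ) : seqTail (seqCons a l) = l := by
  ext i; simp

@[simp]
lemma seqCons_seqTail (l : ℕ →₀ ℕ) : seqCons (l 0) (seqTail l) = l := by
  ext i; cases i <;> simp

lemma degree_eq_add_degree_seqTail (l : ℕ →₀ ℕ) : l.degree = l 0 + (seqTail l).degree := by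
  conv_lhs => rw [← seqCons_seqTail l]
  simp only [seqCons, map_add, Finsupp.degree_single, Finsupp.degree_mapDomain]

lemma degree_sup_add_degree_inf (l m : ℕ →₀ ℕ) :
    (l ⊔ m).degree + (l ⊓ m).degree = l.degree + m.degree := by
  rw [← map_add, ← map_add]
  congr 1
  ext i
  exact max_add_min (l i) (m i)

/-- The relation `k ≺ l` between sequences: `l 0 ≥ k 0 ≥ l 1 ≥ k 1 ≥ ⋯`. It forces both sequences
to be nonincreasing, that is, to be integer partitions. -/
def Interlaces (k l : ℕ →₀ ℕ) : Prop := ∀ i, k i ≤ l i ∧ l (i + 1) ≤ k i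

lemma Interlaces.le {k l : ℕ →₀ ℕ} (h : Interlaces k l) : k ≤ l := fun i => (h i).1

lemma Interlaces.degree_le {k l : ℕ →₀ ℕ} (h : Interlaces k l) : k.degree ≤ l.degree :=
  Finsupp.degree_mono h.le

@[simp]
lemma interlaces_zero_right {k : ℕ →₀ ℕ} : Interlaces k 0 ↔ k = 0 :=
  ⟨fun h => le_bot_iff.1 h.le, by rintro rfl i; simp⟩

/-- The piecewise-linear involution `tᵢ ↦ max (l (i + 1)) (m (i + 1)) + min (l i) (m i) - tᵢ`. It
exchanges the partitions `k ≺ l, m` with the tails of the partitions `v ≻ l, m`. -/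
noncomputable def toggle (l m t : ℕ →₀ ℕ) : ℕ →₀ ℕ := seqTail (l ⊔ m) + l ⊓ m - t

lemma toggle_apply (l m t : ℕ →₀ ℕ) (i : ℕ) :
    toggle l m t i = max (l (i + 1)) (m (i + 1)) + min (l i) (m i) - t i := rfl

lemma toggle_toggle {l m t : ℕ →₀ ℕ} (h : t ≤ seqTail (l ⊔ m) + l ⊓ m) :
    toggle l m (toggle l m t) = t :=
  tsub_tsub_cancel_of_le h

variable {l m k v : ℕ →₀ ℕ}

lemma seqTail_le_of_interlaces (hl : Interlaces l v) (hm : Interlaces m v) :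
    seqTail v ≤ seqTail (l ⊔ m) + l ⊓ m := fun i =>
  le_add_of_nonneg_of_le (Nat.zero_le _) (le_min (hl i).2 (hm i).2)

lemma le_of_interlaces (hl : Interlaces k l) (hm : Interlaces k m) :
    k ≤ seqTail (l ⊔ m) + l ⊓ m := fun i =>
  le_add_of_nonneg_of_le (Nat.zero_le _) (le_min (hl i).1 (hm i).1)

lemma toggle_seqTail_interlaces (hl : Interlaces l v) (hm : Interlaces m v) :
    Interlaces (toggle l m (seqTail v)) l ∧ Interlaces (toggle l m (seqTail v)) m := by
  refine ⟨fun i => ?_, fun i => ?_⟩ <;>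
  · have := hl i; have := hm i; have := hl (i + 1); have := hm (i + 1)
    rw [toggle_apply, seqTail_apply]
    omega

lemma interlaces_seqCons_toggle (hl : Interlaces k l) (hm : Interlaces k m) (n : ℕ) :
    Interlaces l (seqCons (max (l 0) (m 0) + n) (toggle l m k)) ∧
      Interlaces m (seqCons (max (l 0) (m 0) + n) (toggle l m k)) := by
  refine ⟨fun i => ?_, fun i => ?_⟩ <;>
  · have := hl i; have := hm i
    cases i with
    | zero => simp only [seqCons_zero, seqCons_succ, toggle_apply]; omega
    | succ i =>
      have := hl i; have := hm i
      simp only [seqCons_succ, toggle_apply]; omega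

/-- The local bijection behind the Cauchy identity: a partition `v ≻ l, m` is determined by a
partition `k ≺ l, m` together with the excess of its largest part. -/
noncomputable def toggleEquiv (l m : ℕ →₀ ℕ) :
    {v | Interlaces l v ∧ Interlaces m v} ≃ ℕ × {k | Interlaces k l ∧ Interlaces k m} where
  toFun v := (v.1 0 - max (l 0) (m 0), ⟨toggle l m (seqTail v.1),
    toggle_seqTail_interlaces v.2.1 v.2.2⟩)
  invFun p := ⟨seqCons (max (l 0) (m 0) + p.1) (toggle l m p.2.1),
    interlaces_seqCons_toggle p.2.2.1 p.2.2.2 p.1⟩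
  left_inv := by
    rintro ⟨v, hl, hm⟩
    have h0 : max (l 0) (m 0) + (v 0 - max (l 0) (m 0)) = v 0 :=
      Nat.add_sub_of_le (max_le (hl 0).1 (hm 0).1)
    simp only [h0, toggle_toggle (seqTail_le_of_interlaces hl hm), seqCons_seqTail]
  right_inv := by
    rintro ⟨n, k, hl, hm⟩
    simp only [seqCons_zero, seqTail_seqCons, add_tsub_cancel_left,
      toggle_toggle (le_of_interlaces hl hm)]

lemma degree_toggle_add_degree (hl : Interlaces l v) (hm : Interlaces m v) :
    (toggle l m (seqTail v)).degree + v.degree =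
      l.degree + m.degree + (v 0 - max (l 0) (m 0)) := by
  have htoggle : (toggle l m (seqTail v)).degree + (seqTail v).degree =
      (seqTail (l ⊔ m)).degree + (l ⊓ m).degree := by
    rw [← map_add, ← map_add, toggle, tsub_add_cancel_of_le (seqTail_le_of_interlaces hl hm)]
  have hsup := degree_eq_add_degree_seqTail (l ⊔ m)
  have hv := degree_eq_add_degree_seqTail v
  have hsum := degree_sup_add_degree_inf l m
  have h0 : max (l 0) (m 0) ≤ v 0 := max_le (hl 0).1 (hm 0).1
  rw [Finsupp.sup_apply] at hsup
  omega

end Interlacing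

section Schur

variable (x y : ℝ≥0∞) (k l m : ℕ →₀ ℕ)

/-- The one-variable skew Schur function `s_{l/k}(x)`, with values in `ℝ≥0∞` so that sums may be
rearranged freely. -/
noncomputable def skewSchur : ℝ≥0∞ :=
  if Interlaces k l then x ^ (l.degree - k.degree) else 0

variable {k l} in
lemma skewSchur_of_interlaces (h : Interlaces k l) :
    skewSchur x k l = x ^ (l.degree - k.degree) := if_pos h

variable {x k l} in
lemma interlaces_of_skewSchur_ne_zero (h : skewSchur x k l ≠ 0) : Interlaces k l :=
  of_not_not fun hkl => h (if_neg hkl)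

lemma skewSchur_zero_right : skewSchur x k 0 = if k = 0 then 1 else 0 := by
  simp [skewSchur]

variable {l m} in
lemma skewSchur_mul_skewSchur_eq_pow_mul {v : ℕ →₀ ℕ} (hl : Interlaces l v)
    (hm : Interlaces m v) :
    skewSchur x l v * skewSchur y m v = (x * y) ^ (v 0 - max (l 0) (m 0)) *
      (skewSchur x (toggle l m (seqTail v)) m * skewSchur y (toggle l m (seqTail v)) l) := by
  obtain ⟨hkl, hkm⟩ := toggle_seqTail_interlaces hl hm
  have hdegree := degree_toggle_add_degree hl hm
  have := hl.degree_le; have := hm.degree_le; have := hkl.degree_le; have := hkm.degree_le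
  rw [skewSchur_of_interlaces x hl, skewSchur_of_interlaces y hm, skewSchur_of_interlaces x hkm,
    skewSchur_of_interlaces y hkl, mul_pow, mul_mul_mul_comm, ← pow_add, ← pow_add]
  congr 2 <;> omega

theorem tsum_skewSchur_mul_skewSchur :
    ∑' v, skewSchur x l v * skewSchur y m v =
      (1 - x * y)⁻¹ * ∑' k, skewSchur x k m * skewSchur y k l := by
  have hup : (Function.support fun v => skewSchur x l v * skewSchur y m v) ⊆
      {v | Interlaces l v ∧ Interlaces m v} := fun v hv =>
    ⟨interlaces_of_skewSchur_ne_zero (left_ne_zero_of_mul hv),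
      interlaces_of_skewSchur_ne_zero (right_ne_zero_of_mul hv)⟩
  have hdown : (Function.support fun k => skewSchur x k m * skewSchur y k l) ⊆
      {k | Interlaces k l ∧ Interlaces k m} := fun k hk =>
    ⟨interlaces_of_skewSchur_ne_zero (right_ne_zero_of_mul hk),
      interlaces_of_skewSchur_ne_zero (left_ne_zero_of_mul hk)⟩
  rw [← tsum_subtype_eq_of_support_subset hup, ← tsum_subtype_eq_of_support_subset hdown,
    ← ENNReal.tsum_geometric, ← ENNReal.tsum_mul_right]
  simp_rw [← ENNReal.tsum_mul_left]
  rw [← ENNReal.tsum_prod (f := fun (n : ℕ) (k : {k | Interlaces k l ∧ Interlaces k m}) =>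
    (x * y) ^ n * (skewSchur x k m * skewSchur y k l)), ← (toggleEquiv l m).tsum_eq]
  exact tsum_congr fun v => skewSchur_mul_skewSchur_eq_pow_mul x y v.2.1 v.2.2

/-- The vertex operator `Γ₋(x)` on functions of a partition, `(Γ₋(x) g)(l) = ∑_{k ≺ l} x^{|l| - |k|}
g(k)`. -/
noncomputable def vertexDown (g : (ℕ →₀ ℕ) → ℝ≥0∞) (l : ℕ →₀ ℕ) : ℝ≥0∞ :=
  ∑' k, skewSchur x k l * g k

/-- The vertex operator `Γ₊(x)` on functions of a partition, `(Γ₊(x) g)(k) = ∑_{l ≻ k} x^{|l| - |k|}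
g(l)`; it is the adjoint of `vertexDown x`. -/
noncomputable def vertexUp (g : (ℕ →₀ ℕ) → ℝ≥0∞) (k : ℕ →₀ ℕ) : ℝ≥0∞ :=
  ∑' l, skewSchur x k l * g l

variable (f g : (ℕ →₀ ℕ) → ℝ≥0∞)

lemma vertexDown_zero_right : vertexDown x g 0 = g 0 := by
  simp [vertexDown, skewSchur_zero_right]

lemma tsum_vertexDown_mul : ∑' l, vertexDown x f l * g l = ∑' k, f k * vertexUp x g k := by
  simp_rw [vertexDown, vertexUp, ← ENNReal.tsum_mul_left, ← ENNReal.tsum_mul_right]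
  rw [ENNReal.tsum_comm]
  exact tsum_congr fun k => tsum_congr fun l => by ring

theorem vertexUp_vertexDown :
    vertexUp x (vertexDown y g) l = (1 - x * y)⁻¹ * vertexDown y (vertexUp x g) l := calc
  vertexUp x (vertexDown y g) l
    = ∑' m, (∑' v, skewSchur x l v * skewSchur y m v) * g m := by
      simp_rw [vertexUp, vertexDown, ← ENNReal.tsum_mul_left, ← ENNReal.tsum_mul_right, mul_assoc]
      exact ENNReal.tsum_comm
  _ = (1 - x * y)⁻¹ * ∑' m, ∑' k, skewSchur x k m * skewSchur y k l * g m := by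
      simp_rw [tsum_skewSchur_mul_skewSchur, mul_assoc, ENNReal.tsum_mul_left,
        ← ENNReal.tsum_mul_right, mul_assoc]
  _ = (1 - x * y)⁻¹ * vertexDown y (vertexUp x g) l := by
      simp_rw [vertexDown, vertexUp, ← ENNReal.tsum_mul_left]
      rw [ENNReal.tsum_comm]
      exact tsum_congr fun k => tsum_congr fun m => by ring

/-- The Schur function `s_l(x₀, …, x_{N-1})`, built up by the branching rule: `schur x N l` is
`Γ₋(x₀) ⋯ Γ₋(x_{N-1})` applied to the indicator of the empty partition. -/
noncomputable def schur (x : ℕ → ℝ≥0∞) : ℕ → (ℕ →₀ ℕ) → ℝ≥0∞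
  | 0 => fun l => if l = 0 then 1 else 0
  | N + 1 => vertexDown (x 0) (schur (fun i => x (i + 1)) N)

variable (N M : ℕ)

lemma schur_zero_right (x : ℕ → ℝ≥0∞) : schur x N 0 = 1 := by
  induction N generalizing x with
  | zero => simp [schur]
  | succ N ih => rw [schur, vertexDown_zero_right, ih]

lemma tsum_schur_zero_mul (x : ℕ → ℝ≥0∞) : ∑' l, schur x 0 l * g l = g 0 := by
  simp [schur]

lemma tsum_schur_mul_vertexDown (x : ℕ → ℝ≥0∞) :
    ∑' l, schur x N l * vertexDown y g l =
      (∏ i ∈ Finset.range N, (1 - x i * y)⁻¹) * ∑' l, schur x N l * g l := by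
  induction N generalizing x g with
  | zero => simp only [tsum_schur_zero_mul, vertexDown_zero_right, Finset.range_zero,
      Finset.prod_empty, one_mul]
  | succ N ih =>
    set x' := fun i => x (i + 1)
    calc ∑' l, schur x (N + 1) l * vertexDown y g l
      _ = ∑' k, schur x' N k * vertexUp (x 0) (vertexDown y g) k := tsum_vertexDown_mul ..
      _ = (1 - x 0 * y)⁻¹ * ∑' k, schur x' N k * vertexDown y (vertexUp (x 0) g) k := by
        simp_rw [vertexUp_vertexDown, mul_left_comm, ENNReal.tsum_mul_left]
      _ = (∏ i ∈ Finset.range (N + 1), (1 - x i * y)⁻¹) *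
            ∑' k, schur x' N k * vertexUp (x 0) g k := by
        rw [ih, Finset.prod_range_succ', ← mul_assoc, mul_comm (1 - x 0 * y)⁻¹]
      _ = _ := by rw [schur, tsum_vertexDown_mul]

theorem tsum_schur_mul_schur (x y : ℕ → ℝ≥0∞) :
    ∑' l, schur x N l * schur y M l =
      ∏ i ∈ Finset.range N, ∏ j ∈ Finset.range M, (1 - x i * y j)⁻¹ := by
  induction M generalizing y with
  | zero =>
    simp_rw [mul_comm (schur x N _), tsum_schur_zero_mul, schur_zero_right,
      Finset.range_zero, Finset.prod_empty, Finset.prod_const_one]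
  | succ M ih =>
    simp_rw [Finset.prod_range_succ', Finset.prod_mul_distrib, ← ih, schur,
      tsum_schur_mul_vertexDown, mul_comm]

end Schur

section GelfandTsetlin

/-- The Gelfand–Tsetlin patterns with top row `l` and `N` rows: chains of partitions
`l = c 0 ≻ c 1 ≻ ⋯ ≻ c N = 0`, continued by empty partitions. -/
def GTPattern (N : ℕ) (l : ℕ →₀ ℕ) : Set (ℕ → ℕ →₀ ℕ) :=
  {c | c 0 = l ∧ (∀ i, Interlaces (c (i + 1)) (c i)) ∧ ∀ i, N ≤ i → c i = 0}

variable {N : ℕ} {l : ℕ →₀ ℕ} {c : ℕ → ℕ →₀ ℕ}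

lemma GTPattern.apply_eq_zero (hc : c ∈ GTPattern N l) {i t : ℕ} (h : N ≤ i + t) :
    c i t = 0 := by
  induction t generalizing i with
  | zero => rw [hc.2.2 i h, Finsupp.zero_apply]
  | succ t ih => exact Nat.le_zero.1 (((hc.2.1 i t).2).trans_eq (ih (by omega)))

lemma mem_GTPattern_zero : c ∈ GTPattern 0 l ↔ c = 0 ∧ l = 0 := by
  constructor
  · rintro ⟨rfl, -, hc⟩
    exact ⟨funext fun i => hc i i.zero_le, hc 0 le_rfl⟩
  · rintro ⟨rfl, rfl⟩
    exact ⟨rfl, fun _ => interlaces_zero_right.2 rfl, fun _ _ => rfl⟩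

/-- Removing the top row of a Gelfand–Tsetlin pattern. -/
def GTPattern.succEquiv (N : ℕ) (l : ℕ →₀ ℕ) :
    GTPattern (N + 1) l ≃ Σ k : {k | Interlaces k l}, GTPattern N k where
  toFun c := ⟨⟨c.1 1, by simpa only [Set.mem_ofPred_eq, c.2.1] using c.2.2.1 0⟩,
    fun i => c.1 (i + 1), rfl, fun i => c.2.2.1 (i + 1), fun i hi => c.2.2.2 (i + 1) (by omega)⟩
  invFun p := ⟨fun | 0 => l | i + 1 => p.2.1 i, rfl,
    fun | 0 => by simpa only [p.2.2.1] using p.1.2.out | i + 1 => p.2.2.2.1 i,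
    fun | 0, hi => by omega | i + 1, hi => p.2.2.2.2 i (by omega)⟩
  left_inv := by
    rintro ⟨c, rfl, _⟩
    ext i
    cases i <;> rfl
  right_inv := by
    rintro ⟨⟨k, hk⟩, c, hc, _⟩
    change c 0 = k at hc
    subst hc
    rfl

lemma vertexDown_eq_tsum_interlaces (x : ℝ≥0∞) (g : (ℕ →₀ ℕ) → ℝ≥0∞) (l : ℕ →₀ ℕ) :
    vertexDown x g l = ∑' k : {k | Interlaces k l}, x ^ (l.degree - (k : ℕ →₀ ℕ).degree) * g k := by
  have hsupport : (Function.support fun k => skewSchur x k l * g k) ⊆ {k | Interlaces k l} :=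
    fun k hk => interlaces_of_skewSchur_ne_zero (left_ne_zero_of_mul hk)
  rw [vertexDown, ← tsum_subtype_eq_of_support_subset hsupport]
  exact tsum_congr fun k => by rw [skewSchur_of_interlaces x k.2]

theorem schur_eq_tsum_GTPattern (x : ℕ → ℝ≥0∞) (N : ℕ) (l : ℕ →₀ ℕ) :
    schur x N l = ∑' c : GTPattern N l,
      ∏ i ∈ Finset.range N, x i ^ ((c.1 i).degree - (c.1 (i + 1)).degree) := by
  induction N generalizing x l with
  | zero =>
    simp only [schur, Finset.range_zero, Finset.prod_empty]
    split_ifs with hl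
    · have hpattern : GTPattern 0 l = {0} := by ext c; simp [mem_GTPattern_zero, hl]
      rw [hpattern, tsum_singleton (0 : ℕ → ℕ →₀ ℕ) fun _ => (1 : ℝ≥0∞)]
    · have : IsEmpty (GTPattern 0 l) := ⟨fun c => hl (mem_GTPattern_zero.1 c.2).2⟩
      rw [tsum_empty]
  | succ N ih =>
    rw [schur, vertexDown_eq_tsum_interlaces, ← (GTPattern.succEquiv N l).symm.tsum_eq,
      ENNReal.tsum_sigma']
    refine tsum_congr fun k => ?_
    rw [ih, ← ENNReal.tsum_mul_left]
    refine tsum_congr fun c => ?_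
    rw [Finset.prod_range_succ', mul_comm]
    exact congrArg (fun k' => _ * x 0 ^ (l.degree - k'.degree)) c.2.1.symm

lemma GTPattern.antitone_degree (hc : c ∈ GTPattern N l) : Antitone fun i => (c i).degree :=
  antitone_nat_of_succ_le fun i => (hc.2.1 i).degree_le

lemma GTPattern.hasSum_degree_succ (hc : c ∈ GTPattern N l) :
    HasSum (fun i => (c (i + 1)).degree) (∑ i ∈ Finset.range N, (c (i + 1)).degree) :=
  hasSum_sum_of_ne_finset_zero fun i hi => by
    rw [hc.2.2 (i + 1) (by rw [Finset.mem_range] at hi; omega), map_zero]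

/-- Abel summation, in the exponent of `q`. -/
lemma prod_pow_sub_mul_pow {s : ℕ → ℕ} (hs : Antitone s) {M : Type*} [CommMonoid M] (q : M)
    (a N : ℕ) :
    (∏ i ∈ Finset.range N, (q ^ (a + i)) ^ (s i - s (i + 1))) * q ^ ((a + N) * s N) =
      q ^ (a * s 0 + ∑ i ∈ Finset.range N, s (i + 1)) := by
  induction N with
  | zero => simp
  | succ N ih =>
    have hexponent : (a + N) * (s N - s (N + 1)) + (a + (N + 1)) * s (N + 1) =
        (a + N) * s N + s (N + 1) := by
      obtain ⟨d, hd⟩ := Nat.exists_eq_add_of_le (hs N.le_succ)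
      rw [Nat.succ_eq_add_one] at hd
      rw [hd, Nat.add_sub_cancel_left]
      ring
    rw [Finset.prod_range_succ, Finset.sum_range_succ, ← pow_mul, mul_assoc, ← pow_add, hexponent,
      pow_add, ← mul_assoc, ih, ← pow_add, add_assoc]

lemma schur_pow_eq_tsum_GTPattern (q : ℝ≥0∞) (a N : ℕ) (l : ℕ →₀ ℕ) :
    schur (fun i => q ^ (a + i)) N l = ∑' c : GTPattern N l,
      q ^ (a * l.degree + ∑ i ∈ Finset.range N, (c.1 (i + 1)).degree) := by
  rw [schur_eq_tsum_GTPattern]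
  refine tsum_congr fun c => ?_
  have h := prod_pow_sub_mul_pow (GTPattern.antitone_degree c.2) q a N
  rwa [c.2.2.2 N le_rfl, map_zero, mul_zero, pow_zero, mul_one, c.2.1] at h

end GelfandTsetlin

namespace PlanePartition

lemma ext_part {π π' : PlanePartition} (h : π.part = π'.part) : π = π' := by
  cases π
  cases π'
  cases h
  rfl

/-- The plane partition with rows and columns exchanged. -/
def transpose (π : PlanePartition) : PlanePartition where
  part i j := π.part j i
  antitone_fst _ _ j h := π.antitone_snd j h
  antitone_snd i _ _ h := π.antitone_fst i h
  finite_support := π.finite_support.preimage Prod.swap_injective.injOn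

/-- The `i`-th superdiagonal slice `t ↦ π_{t, t + i}`; the subdiagonal slices are those of
`π.transpose`. -/
noncomputable def diag (π : PlanePartition) (i : ℕ) : ℕ →₀ ℕ :=
  Finsupp.ofSupportFinite (fun t => π.part t (t + i)) <|
    π.finite_support.preimage (f := fun t => (t, t + i))
      (Function.Injective.injOn fun _ _ h => (Prod.ext_iff.1 h).1)

variable (π : PlanePartition)

lemma diag_apply (i t : ℕ) : π.diag i t = π.part t (t + i) := rfl

lemma diag_succ_interlaces (i : ℕ) : Interlaces (π.diag (i + 1)) (π.diag i) := fun t =>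
  ⟨π.antitone_snd t (by omega), by
    simpa only [diag_apply, add_right_comm, add_assoc] using
      π.antitone_fst (t + 1 + i) (Nat.le_succ t)⟩

/-- The cells on or above the diagonal, and those below it, each coordinatized by the distance to
the diagonal and the position along it. -/
def diagonalEquiv : (ℕ × ℕ) ⊕ (ℕ × ℕ) ≃ ℕ × ℕ where
  toFun := Sum.elim (fun p => (p.2, p.2 + p.1)) (fun p => (p.2 + (p.1 + 1), p.2))
  invFun p := if p.1 ≤ p.2 then .inl (p.2 - p.1, p.1) else .inr (p.1 - p.2 - 1, p.2)
  left_inv := by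
    rintro (⟨i, t⟩ | ⟨i, t⟩) <;> simp
  right_inv := by
    rintro ⟨i, j⟩
    by_cases h : i ≤ j
    · simp [h]
    · simp only [h, if_false, Sum.elim_inr, Prod.mk.injEq, and_true]
      omega

lemma tsum_prod_eq_tsum_degree {f : ℕ × ℕ → ℕ} (hf : Summable f) {l : ℕ → ℕ →₀ ℕ}
    (hl : ∀ i t, f (i, t) = l i t) : ∑' p, f p = ∑' i, (l i).degree := by
  have hrow (i : ℕ) : HasSum (fun t => f (i, t)) (l i).degree := by
    simp_rw [hl, Finsupp.degree_apply]
    exact hasSum_sum_of_ne_finset_zero fun t ht => Finsupp.notMem_support_iff.1 ht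
  rw [hf.tsum_prod' fun i => (hrow i).summable]
  exact tsum_congr fun i => (hrow i).tsum_eq

lemma size_eq_tsum_degree_diag :
    π.size = ∑' i, (π.diag i).degree + ∑' i, (π.transpose.diag (i + 1)).degree := by
  have hsummable {f : ℕ × ℕ → ℕ × ℕ} (hf : f.Injective) :
      Summable fun p => π.part (f p).1 (f p).2 :=
    summable_of_hasFiniteSupport (π.finite_support.preimage hf.injOn)
  have habove := hsummable (diagonalEquiv.injective.comp Sum.inl_injective)
  have hbelow := hsummable (diagonalEquiv.injective.comp Sum.inr_injective)
  rw [size, ← diagonalEquiv.tsum_eq, Summable.tsum_sum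
    (f := fun s => π.part (diagonalEquiv s).1 (diagonalEquiv s).2) habove hbelow]
  exact congrArg₂ _ (tsum_prod_eq_tsum_degree habove fun _ _ => rfl)
    (tsum_prod_eq_tsum_degree hbelow fun _ _ => rfl)

/-- The plane partitions whose nonzero entries lie in the first `N` rows and `N` columns. -/
def box (N : ℕ) : Set PlanePartition := {π | ∀ i j, N ≤ i ∨ N ≤ j → π.part i j = 0}

variable {π} {N : ℕ}

lemma diag_mem_GTPattern (hπ : π ∈ box N) : π.diag ∈ GTPattern N (π.diag 0) :=
  ⟨rfl, π.diag_succ_interlaces, fun i hi => Finsupp.ext fun t => hπ t (t + i) (by omega)⟩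

lemma transpose_mem_box (hπ : π ∈ box N) : π.transpose ∈ box N := fun i j h => hπ j i h.symm

/-- The array with superdiagonal slices `c` and subdiagonal slices `d`. -/
def glue (c d : ℕ → ℕ →₀ ℕ) (i j : ℕ) : ℕ := if i ≤ j then c (j - i) i else d (i - j) j

lemma glue_diag (π : PlanePartition) : glue π.diag π.transpose.diag = π.part := by
  ext i j
  unfold glue
  split_ifs with h
  · rw [diag_apply, Nat.add_sub_of_le h]
  · rw [diag_apply, transpose, Nat.add_sub_of_le (le_of_not_ge h)]

variable {c d : ℕ → ℕ →₀ ℕ} {l : ℕ →₀ ℕ}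

lemma glue_swap (h : c 0 = d 0) (i j : ℕ) : glue c d i j = glue d c j i := by
  rcases lt_trichotomy i j with hij | rfl | hij
  · simp [glue, hij.le, hij.not_ge]
  · simp [glue, h]
  · simp [glue, hij.le, hij.not_ge]

lemma antitone_glue (h : c 0 = d 0) (hc : ∀ i, Interlaces (c (i + 1)) (c i))
    (hd : ∀ i, Interlaces (d (i + 1)) (d i)) (j : ℕ) : Antitone fun i => glue c d i j := by
  refine antitone_nat_of_succ_le fun i => ?_
  rcases lt_or_ge i j with hij | hij
  · obtain ⟨n, rfl⟩ := Nat.exists_eq_add_of_lt hij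
    simpa [glue, hij.le, show i + 1 ≤ i + n + 1 by omega, show i + n + 1 - (i + 1) = n by omega,
      show i + n + 1 - i = n + 1 by omega] using (hc n i).2
  · rw [glue_swap h i j]
    simpa [glue, hij, show ¬ i + 1 ≤ j by omega, Nat.sub_add_comm hij] using (hd (i - j) j).1

lemma glue_eq_zero (hc : c ∈ GTPattern N l) (hd : d ∈ GTPattern N l) {i j : ℕ}
    (h : N ≤ i ∨ N ≤ j) : glue c d i j = 0 := by
  unfold glue
  split_ifs
  · exact GTPattern.apply_eq_zero hc (by omega)
  · exact GTPattern.apply_eq_zero hd (by omega)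

/-- The plane partition with superdiagonal slices `c` and subdiagonal slices `d`. -/
def ofDiags (hc : c ∈ GTPattern N l) (hd : d ∈ GTPattern N l) : PlanePartition where
  part := glue c d
  antitone_fst _ _ j h := antitone_glue (hc.1.trans hd.1.symm) hc.2.1 hd.2.1 j h
  antitone_snd i j j' h := by
    simpa only [glue_swap (hc.1.trans hd.1.symm) i] using
      antitone_glue (hd.1.trans hc.1.symm) hd.2.1 hc.2.1 i h
  finite_support := ((Set.finite_Iio N).prod (Set.finite_Iio N)).subset fun p hp => by
    contrapose! hp
    rw [Set.mem_prod, Set.mem_Iio, Set.mem_Iio, not_and_or, not_lt, not_lt] at hp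
    exact Function.notMem_support.2 (glue_eq_zero hc hd hp)

lemma diag_ofDiags (hc : c ∈ GTPattern N l) (hd : d ∈ GTPattern N l) :
    (ofDiags hc hd).diag = c := by
  ext i t
  simp [diag_apply, ofDiags, glue]

lemma transpose_ofDiags (hc : c ∈ GTPattern N l) (hd : d ∈ GTPattern N l) :
    (ofDiags hc hd).transpose = ofDiags hd hc :=
  ext_part (funext₂ fun i j => glue_swap (hc.1.trans hd.1.symm) j i)

lemma ofDiags_mem_box (hc : c ∈ GTPattern N l) (hd : d ∈ GTPattern N l) :
    ofDiags hc hd ∈ box N := fun _ _ h => glue_eq_zero hc hd h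

lemma sigma_GTPattern_ext {s s' : Σ l, GTPattern N l × GTPattern N l} (hc : s.2.1.1 = s'.2.1.1)
    (hd : s.2.2.1 = s'.2.2.1) : s = s' := by
  obtain ⟨_, ⟨c, rfl, hc'⟩, ⟨d, hd'⟩⟩ := s
  obtain ⟨_, ⟨c, rfl, hc''⟩, ⟨d, hd''⟩⟩ := s'
  dsimp at hc hd
  subst hc hd
  rfl

/-- A plane partition in a box is the pair of Gelfand–Tsetlin patterns formed by its slices on the
two sides of the diagonal. -/
noncomputable def boxEquiv (N : ℕ) : box N ≃ Σ l, GTPattern N l × GTPattern N l where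
  toFun π := ⟨π.1.diag 0, ⟨_, diag_mem_GTPattern π.2⟩,
    ⟨π.1.transpose.diag, diag_mem_GTPattern (transpose_mem_box π.2)⟩⟩
  invFun s := ⟨ofDiags s.2.1.2 s.2.2.2, ofDiags_mem_box s.2.1.2 s.2.2.2⟩
  left_inv π := Subtype.ext (ext_part (glue_diag π.1))
  right_inv s := sigma_GTPattern_ext (diag_ofDiags s.2.1.2 s.2.2.2)
    (by simp only [transpose_ofDiags, diag_ofDiags])

lemma size_of_mem_box (hπ : π ∈ box N) :
    π.size = (π.diag 0).degree + ∑ i ∈ Finset.range N, (π.diag (i + 1)).degree +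
      ∑ i ∈ Finset.range N, (π.transpose.diag (i + 1)).degree := by
  have habove := GTPattern.hasSum_degree_succ (diag_mem_GTPattern hπ)
  have hbelow := GTPattern.hasSum_degree_succ (diag_mem_GTPattern (transpose_mem_box hπ))
  rw [size_eq_tsum_degree_diag, tsum_eq_zero_add' (f := fun i => (π.diag i).degree) habove.summable,
    habove.tsum_eq, hbelow.tsum_eq]

lemma size_ofDiags (hc : c ∈ GTPattern N l) (hd : d ∈ GTPattern N l) :
    (ofDiags hc hd).size = l.degree + ∑ i ∈ Finset.range N, (c (i + 1)).degree +
      ∑ i ∈ Finset.range N, (d (i + 1)).degree := by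
  rw [size_of_mem_box (ofDiags_mem_box hc hd), transpose_ofDiags, diag_ofDiags, diag_ofDiags, hc.1]

lemma tsum_box_pow_size_eq_tsum_schur_mul_schur (q : ℝ≥0∞) (N : ℕ) :
    ∑' π : box N, q ^ (π : PlanePartition).size =
      ∑' l, schur (fun i => q ^ (1 + i)) N l * schur (fun j => q ^ (0 + j)) N l := by
  simp_rw [schur_pow_eq_tsum_GTPattern, ← ENNReal.tsum_mul_right, ← ENNReal.tsum_mul_left, one_mul,
    zero_mul, zero_add, ← pow_add]
  rw [← (boxEquiv N).symm.tsum_eq, ENNReal.tsum_sigma']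
  refine tsum_congr fun l => ?_
  rw [ENNReal.tsum_prod']
  refine tsum_congr fun c => tsum_congr fun d => ?_
  change q ^ (ofDiags c.2 d.2).size = _
  rw [size_ofDiags, add_assoc]

theorem tsum_box_pow_size (q : ℝ≥0∞) (N : ℕ) :
    ∑' π : box N, q ^ (π : PlanePartition).size =
      ∏ i ∈ Finset.range N, ∏ j ∈ Finset.range N, (1 - q ^ (i + j + 1))⁻¹ := by
  simp_rw [tsum_box_pow_size_eq_tsum_schur_mul_schur, tsum_schur_mul_schur, ← pow_add, zero_add,
    add_comm 1, add_right_comm]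

end PlanePartition

section MacMahon

lemma tendsto_tsum_subtype_of_iUnion_eq_univ {α ι : Type*} [SemilatticeSup ι] [Nonempty ι]
    {s : ι → Set α} (hs : Monotone s) (hunion : ⋃ i, s i = Set.univ) (f : α → ℝ≥0∞) :
    Tendsto (fun i => ∑' a : s i, f a) atTop (𝓝 (∑' a, f a)) := by
  refine tendsto_atTop_isLUB (fun i j hij => ENNReal.tsum_mono_subtype f (hs hij)) ⟨?_, ?_⟩
  · rintro _ ⟨i, rfl⟩
    exact ENNReal.tsum_comp_le_tsum_of_injective Subtype.val_injective f
  · intro b hb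
    rw [ENNReal.tsum_eq_iSup_sum]
    refine iSup_le fun F => ?_
    obtain ⟨i, hi⟩ := hs.directed_le.exists_mem_subset_of_finset_subset_biUnion
      (s := F) (by rw [hunion]; exact Set.subset_univ _)
    rw [← F.tsum_subtype]
    exact (ENNReal.tsum_mono_subtype f hi).trans (hb ⟨i, rfl⟩)

lemma PlanePartition.monotone_box : Monotone box := fun _ _ hNM _ hπ i j h =>
  hπ i j (h.imp hNM.trans hNM.trans)

lemma PlanePartition.iUnion_box : ⋃ N, box N = Set.univ := by
  refine Set.eq_univ_of_forall fun π => Set.mem_iUnion.2 ?_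
  obtain ⟨⟨a, b⟩, hab⟩ := π.finite_support.bddAbove
  refine ⟨max a b + 1, fun i j h => of_not_not fun hne => ?_⟩
  obtain ⟨hi, hj⟩ := Prod.mk_le_mk.1 (hab (show (i, j) ∈ _ from hne))
  omega

/-- The logarithm of MacMahon's product `∏_{n ≥ 1} (1 - q ^ n) ^ (-n)`, with each factor `1 - q ^ n`
listed once for each of the `n` cells `(i, j)` with `i + j + 1 = n`. -/
noncomputable def logMacMahon (q : ℝ) : ℝ := ∑' p : ℕ × ℕ, -Real.log (1 - q ^ (p.1 + p.2 + 1))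

variable {q : ℝ}

lemma one_sub_pow_pos (h0 : 0 ≤ q) (h1 : q < 1) (n : ℕ) : 0 < 1 - q ^ (n + 1) :=
  sub_pos.2 (pow_lt_one₀ h0 h1 n.succ_ne_zero)

lemma hasSum_pow_add_succ (h0 : 0 ≤ q) (h1 : q < 1) :
    HasSum (fun p : ℕ × ℕ => q ^ (p.1 + p.2 + 1)) (q / (1 - q) ^ 2) := by
  have hgeom := hasSum_geometric_of_lt_one h0 h1
  have hmul := (hgeom.mul hgeom (hgeom.summable.mul_of_nonneg hgeom.summable
    (fun n => pow_nonneg h0 n) fun n => pow_nonneg h0 n)).mul_left q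
  rw [div_eq_mul_inv, sq, mul_inv]
  exact hmul.congr_fun fun p => by rw [pow_succ', pow_add]

lemma hasSum_logMacMahon (h0 : 0 ≤ q) (h1 : q < 1) :
    HasSum (fun p : ℕ × ℕ => -Real.log (1 - q ^ (p.1 + p.2 + 1))) (logMacMahon q) := by
  refine (Summable.neg ?_).hasSum
  simpa only [← sub_eq_add_neg] using
    Real.summable_log_one_add_of_summable (hasSum_pow_add_succ h0 h1).summable.neg

lemma inv_one_sub_ofReal_pow (h0 : 0 ≤ q) (h1 : q < 1) (n : ℕ) :
    (1 - ENNReal.ofReal q ^ (n + 1))⁻¹ =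
      ENNReal.ofReal (Real.exp (-Real.log (1 - q ^ (n + 1)))) := by
  have hpos := one_sub_pow_pos h0 h1 n
  rw [Real.exp_neg, Real.exp_log hpos, ENNReal.ofReal_inv_of_pos hpos,
    ENNReal.ofReal_sub _ (by positivity), ENNReal.ofReal_one, ENNReal.ofReal_pow h0]

lemma tendsto_prod_inv_one_sub_pow (h0 : 0 ≤ q) (h1 : q < 1) :
    Tendsto (fun N => ∏ i ∈ Finset.range N, ∏ j ∈ Finset.range N,
      (1 - ENNReal.ofReal q ^ (i + j + 1))⁻¹) atTop
      (𝓝 (ENNReal.ofReal (Real.exp (logMacMahon q)))) := by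
  have hpairs : Tendsto (fun N => (Finset.range N, Finset.range N)) atTop atTop :=
    tendsto_atTop_diagonal.comp tendsto_finset_range
  have hsquares : Tendsto (fun N => Finset.range N ×ˢ Finset.range N) atTop atTop :=
    tendsto_finsetProd_atTop.comp hpairs
  have hsum : Tendsto (fun N => ∑ p ∈ Finset.range N ×ˢ Finset.range N,
      -Real.log (1 - q ^ (p.1 + p.2 + 1))) atTop (𝓝 (logMacMahon q)) := by
    have h := hasSum_logMacMahon h0 h1
    rw [HasSum, SummationFilter.unconditional_filter] at h
    exact h.comp hsquares
  refine (ENNReal.tendsto_ofReal (hsum.rexp)).congr fun N => ?_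
  rw [Real.exp_sum, ENNReal.ofReal_prod_of_nonneg fun p _ => (Real.exp_pos _).le,
    Finset.prod_product]
  simp_rw [inv_one_sub_ofReal_pow h0 h1]

theorem hasSum_pow_size (h0 : 0 ≤ q) (h1 : q < 1) :
    HasSum (fun π : PlanePartition => q ^ π.size) (Real.exp (logMacMahon q)) := by
  have htsum : ∑' π : PlanePartition, ENNReal.ofReal q ^ π.size =
      ENNReal.ofReal (Real.exp (logMacMahon q)) := by
    refine tendsto_nhds_unique (tendsto_tsum_subtype_of_iUnion_eq_univ
      PlanePartition.monotone_box PlanePartition.iUnion_box _) ?_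
    simp_rw [PlanePartition.tsum_box_pow_size]
    exact tendsto_prod_inv_one_sub_pow h0 h1
  have hsum := ENNReal.hasSum_toReal (htsum.trans_ne ENNReal.ofReal_ne_top)
  rw [← ENNReal.tsum_toReal_eq fun _ => by simp] at hsum
  simpa only [htsum, ENNReal.toReal_pow, ENNReal.toReal_ofReal h0,
    ENNReal.toReal_ofReal (Real.exp_pos _).le] using hsum

lemma hasSum_nsmul_of_hasSum_add {M : Type*} [AddCommMonoid M] [TopologicalSpace M]
    [ContinuousAdd M] [RegularSpace M] {f : ℕ → M} {a : M}
    (h : HasSum (fun p : ℕ × ℕ => f (p.1 + p.2)) a) : HasSum (fun n => (n + 1) • f n) a := by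
  refine (Finset.HasAntidiagonal.sigmaAntidiagonalEquivProd.hasSum_iff.2 h).sigma fun n => ?_
  have hfiber : ∑ c ∈ Finset.HasAntidiagonal.antidiagonal n, f (c.1 + c.2) = (n + 1) • f n := by
    rw [Finset.sum_congr rfl fun c hc => by rw [Finset.HasAntidiagonal.mem_antidiagonal.1 hc],
      Finset.sum_const, Finset.Nat.card_antidiagonal]
  rw [← hfiber]
  exact (Finset.HasAntidiagonal.antidiagonal n).hasSum fun c => f (c.1 + c.2)

lemma tprod_one_sub_pow (h0 : 0 ≤ q) (h1 : q < 1) :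
    ∏' n : ℕ, (1 - q ^ (n + 1)) ^ (n + 1) = Real.exp (-logMacMahon q) := by
  have hsum := (hasSum_nsmul_of_hasSum_add
    (f := fun n => -Real.log (1 - q ^ (n + 1))) (hasSum_logMacMahon h0 h1)).neg
  refine (Real.hasProd_of_hasSum_log (fun n => pow_pos (one_sub_pow_pos h0 h1 n) _) ?_).tprod_eq
  simpa using hsum

end MacMahon

section Asymptotics

lemma tendsto_const_mul_nhdsGT_zero {a : ℝ} (ha : 0 < a) :
    Tendsto (fun r => a * r) (𝓝[>] 0) (𝓝[>] 0) :=
  fun _ hs => eventually_nhdsGT_zero_mul_left ha hs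

lemma hasSum_of_nonneg_of_hasSum_rows_of_hasSum_cols {α β : Type*} {f : α → β → ℝ}
    (hf : ∀ a b, 0 ≤ f a b) {g : α → ℝ} {h : β → ℝ} {s : ℝ} (hrow : ∀ a, HasSum (f a) (g a))
    (hg : HasSum g s) (hcol : ∀ b, HasSum (fun a => f a b) (h b)) : HasSum h s := by
  have hsummable : Summable fun p : α × β => f p.1 p.2 :=
    (summable_prod_of_nonneg fun p => hf p.1 p.2).2
      ⟨fun a => (hrow a).summable, hg.summable.congr fun a => (hrow a).tsum_eq.symm⟩
  rw [hg.unique (hsummable.hasSum.prod_fiberwise hrow)]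
  exact ((Equiv.prodComm β α).hasSum_iff.2 hsummable.hasSum).prod_fiberwise hcol

lemma hasSum_logMacMahon_expansion {q : ℝ} (h0 : 0 ≤ q) (h1 : q < 1) :
    HasSum (fun k : ℕ => q ^ (k + 1) / (1 - q ^ (k + 1)) ^ 2 / (k + 1)) (logMacMahon q) := by
  refine hasSum_of_nonneg_of_hasSum_rows_of_hasSum_cols
    (f := fun (p : ℕ × ℕ) (k : ℕ) => (q ^ (p.1 + p.2 + 1)) ^ (k + 1) / (k + 1))
    (fun p k => by positivity) (fun p => ?_) (hasSum_logMacMahon h0 h1) fun k => ?_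
  · refine Real.hasSum_pow_div_log_of_abs_lt_one ?_
    rw [abs_of_nonneg (by positivity)]
    exact pow_lt_one₀ h0 h1 (Nat.succ_ne_zero _)
  · simp_rw [pow_right_comm q _ (k + 1)]
    exact (hasSum_pow_add_succ (by positivity)
      (pow_lt_one₀ h0 h1 k.succ_ne_zero)).div_const _

/-- The Einstein function `x² eˣ / (eˣ - 1)²`, written as `(x / (2 sinh (x / 2)))²`; here it is the
ratio of `∑ n e⁻ⁿˣ` to its leading term `x⁻²` as `x → 0`. Division by zero makes it `0` at `0`. -/
noncomputable def einsteinFun (x : ℝ) : ℝ := (x / 2 / Real.sinh (x / 2)) ^ 2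

lemma einsteinFun_nonneg (x : ℝ) : 0 ≤ einsteinFun x := sq_nonneg _

lemma einsteinFun_le_one {x : ℝ} (hx : 0 ≤ x) : einsteinFun x ≤ 1 := by
  have hx2 : 0 ≤ x / 2 := by positivity
  have hsinh : 0 ≤ Real.sinh (x / 2) := Real.sinh_nonneg_iff.2 hx2
  exact pow_le_one₀ (by positivity) (div_le_one_of_le₀ (Real.self_le_sinh_iff.2 hx2) hsinh)

lemma tendsto_einsteinFun : Tendsto einsteinFun (𝓝[>] 0) (𝓝 1) := by
  have hslope : Tendsto (fun y : ℝ => y / Real.sinh y) (𝓝[>] 0) (𝓝 1) := by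
    simpa [div_eq_mul_inv, mul_comm] using
      (Real.hasDerivAt_sinh 0).tendsto_slope_zero_right.inv₀ (by simp)
  refine (one_pow (M := ℝ) 2 ▸ (hslope.comp
    (tendsto_const_mul_nhdsGT_zero (half_pos one_pos))).pow 2).congr fun x => ?_
  rw [Function.comp_apply, one_div_mul_eq_div, einsteinFun]

lemma exp_neg_div_one_sub_exp_neg_sq {x : ℝ} (hx : x ≠ 0) :
    Real.exp (-x) / (1 - Real.exp (-x)) ^ 2 = einsteinFun x / x ^ 2 := by
  have hexp : Real.exp (-x) = Real.exp (-(x / 2)) ^ 2 := by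
    rw [← Real.exp_nat_mul]; congr 1; push_cast; ring
  have hden : 1 - Real.exp (-x) = Real.exp (-(x / 2)) * (2 * Real.sinh (x / 2)) := by
    rw [Real.sinh_eq, hexp, mul_div_cancel₀ _ two_ne_zero, mul_sub, ← Real.exp_add]; simp [sq]
  rw [hden, hexp, einsteinFun, mul_pow, div_mul_cancel_left₀ (by positivity)]
  field_simp

lemma summable_inv_succ_pow_three : Summable fun k : ℕ => ((k : ℝ) + 1)⁻¹ ^ 3 := by
  simpa using (summable_nat_add_iff 1).2 (Real.summable_nat_pow_inv (p := 3).2 (by norm_num))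

lemma hasSum_sq_mul_logMacMahon_exp_neg {r : ℝ} (hr : 0 < r) :
    HasSum (fun k : ℕ => ((k : ℝ) + 1)⁻¹ ^ 3 * einsteinFun ((k + 1) * r))
      (r ^ 2 * logMacMahon (Real.exp (-r))) := by
  have hsum := (hasSum_logMacMahon_expansion (Real.exp_pos (-r)).le
    (Real.exp_lt_one_iff.2 (neg_neg_iff_pos.2 hr))).mul_left (r ^ 2)
  refine hsum.congr_fun fun k => ?_
  have hexp : Real.exp (-r) ^ (k + 1) = Real.exp (-((k + 1) * r)) := by
    rw [← Real.exp_nat_mul]; push_cast; ring_nf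
  rw [hexp, exp_neg_div_one_sub_exp_neg_sq (by positivity)]
  field_simp

lemma tendsto_sq_mul_logMacMahon_exp_neg :
    Tendsto (fun r => r ^ 2 * logMacMahon (Real.exp (-r))) (𝓝[>] 0)
      (𝓝 (∑' n : ℕ, ((n : ℝ) + 1)⁻¹ ^ 3)) := by
  refine Tendsto.congr' (eventually_mem_nhdsWithin.mono fun r hr =>
    (hasSum_sq_mul_logMacMahon_exp_neg hr).tsum_eq) ?_
  refine tendsto_tsum_of_dominated_convergence summable_inv_succ_pow_three (fun k => ?_) ?_
  · have hk : Tendsto (fun r : ℝ => (k + 1) * r) (𝓝[>] 0) (𝓝[>] 0) :=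
      tendsto_const_mul_nhdsGT_zero k.cast_add_one_pos
    simpa only [mul_one, Function.comp_apply] using
      (tendsto_einsteinFun.comp hk).const_mul (((k : ℝ) + 1)⁻¹ ^ 3)
  · filter_upwards [self_mem_nhdsWithin] with r (hr : 0 < r) k
    rw [Real.norm_of_nonneg (mul_nonneg (by positivity) (einsteinFun_nonneg _))]
    exact mul_le_of_le_one_right (by positivity) (einsteinFun_le_one (by positivity))

end Asymptotics

section Concentration

variable {ι : Type*} {X : ι → ℝ} {F : ℝ → ℝ} {A ε : ℝ} {p : ℕ}

lemma tsum_ite_lt_abs_le_exp_mul {w Y : ι → ℝ} {t a b : ℝ} (ht : 0 ≤ t) (hw : ∀ i, 0 ≤ w i)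
    (hpos : HasSum (fun i => w i * Real.exp (t * Y i)) a)
    (hneg : HasSum (fun i => w i * Real.exp (-t * Y i)) b) :
    ∑' i, (if ε < |Y i| then w i else 0) ≤ Real.exp (-(t * ε)) * (a + b) := by
  have htilt : HasSum (fun i => w i * Real.exp (t * (Y i - ε)) + w i * Real.exp (t * (-Y i - ε)))
      (Real.exp (-(t * ε)) * (a + b)) := by
    refine ((hpos.add hneg).mul_left _).congr_fun fun i => ?_
    rw [show t * (Y i - ε) = t * Y i + -(t * ε) by ring,
      show t * (-Y i - ε) = -t * Y i + -(t * ε) by ring, Real.exp_add, Real.exp_add]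
    ring
  have hle : ∀ i, (if ε < |Y i| then w i else 0) ≤
      w i * Real.exp (t * (Y i - ε)) + w i * Real.exp (t * (-Y i - ε)) := by
    intro i
    have hleft : 0 ≤ w i * Real.exp (t * (Y i - ε)) := mul_nonneg (hw i) (Real.exp_pos _).le
    have hright : 0 ≤ w i * Real.exp (t * (-Y i - ε)) := mul_nonneg (hw i) (Real.exp_pos _).le
    have hone : ∀ {y}, ε < y → w i ≤ w i * Real.exp (t * (y - ε)) := fun hy =>
      le_mul_of_one_le_right (hw i) (Real.one_le_exp (mul_nonneg ht (sub_nonneg.2 hy.le)))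
    split_ifs with h
    · rcases lt_abs.1 h with h | h
      · exact (hone h).trans (le_add_of_nonneg_right hright)
      · exact (hone h).trans (le_add_of_nonneg_left hleft)
    · exact add_nonneg hleft hright
  have hnonneg : ∀ i, 0 ≤ if ε < |Y i| then w i else 0 := fun i =>
    ite_nonneg (hw i) le_rfl
  exact htilt.tsum_eq ▸
    (Summable.of_nonneg_of_le hnonneg hle htilt.summable).tsum_le_tsum hle htilt.summable

/-- Tilting the Gibbs weights only moves the inverse temperature from `r` to `(1 - d) * r`. -/
lemma hasSum_gibbs_mul_exp (hF : ∀ r > 0, HasSum (fun i => Real.exp (-(r * X i))) (Real.exp (F r)))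
    {r d : ℝ} (hr : 0 < r) (hd : d < 1) :
    HasSum (fun i => Real.exp (-(r * X i)) * Real.exp (-F r) *
        Real.exp (d / r ^ p * (r ^ (p + 1) * X i - p * A)))
      (Real.exp (F ((1 - d) * r) - F r - d * (p * A) / r ^ p)) := by
  have hsum := (hF ((1 - d) * r) (mul_pos (sub_pos.2 hd) hr)).mul_right
    (Real.exp (-F r - d * (p * A) / r ^ p))
  rw [← Real.exp_add, ← add_sub_assoc, ← sub_eq_add_neg] at hsum
  refine hsum.congr_fun fun i => ?_
  rw [← Real.exp_add, ← Real.exp_add, ← Real.exp_add]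
  congr 1
  field_simp
  ring

lemma tendsto_exp_tilted_free_energy (hp : p ≠ 0)
    (hA : Tendsto (fun r => r ^ p * F r) (𝓝[>] 0) (𝓝 A)) {d : ℝ} (hd : d < 1)
    (hrate : A / (1 - d) ^ p - A - d * (p * A) < |d| * ε) :
    Tendsto (fun r => Real.exp (-(|d| / r ^ p * ε)) *
      Real.exp (F ((1 - d) * r) - F r - d * (p * A) / r ^ p)) (𝓝[>] 0) (𝓝 0) := by
  have hd' : 0 < 1 - d := sub_pos.2 hd
  have hscaled : Tendsto (fun r => ((1 - d) * r) ^ p * F ((1 - d) * r) / (1 - d) ^ p - r ^ p * F r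
      - d * (p * A) - |d| * ε) (𝓝[>] 0) (𝓝 (A / (1 - d) ^ p - A - d * (p * A) - |d| * ε)) :=
    ((((hA.comp (tendsto_const_mul_nhdsGT_zero hd')).div_const _).sub hA).sub_const _).sub_const _
  have hinv : Tendsto (fun r : ℝ => r⁻¹ ^ p) (𝓝[>] 0) atTop :=
    (tendsto_pow_atTop hp).comp tendsto_inv_nhdsGT_zero
  refine (Real.tendsto_exp_atBot.comp (hinv.atTop_mul_neg (sub_neg.2 hrate) hscaled)).congr' ?_
  filter_upwards [self_mem_nhdsWithin] with r (hr : 0 < r)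
  rw [Function.comp_apply, ← Real.exp_add, inv_pow, mul_pow]
  congr 1
  field_simp
  ring

lemma eventually_div_one_sub_pow_sub_lt (A : ℝ) (p : ℕ) (hε : 0 < ε) :
    ∀ᶠ d : ℝ in 𝓝[≠] 0, A / (1 - d) ^ p - A - d * (p * A) < |d| * ε := by
  have hderiv : HasDerivAt (fun d : ℝ => A / (1 - d) ^ p) (p * A) 0 := by
    have h := ((((hasDerivAt_id (0 : ℝ)).const_sub 1).pow p).inv (by simp)).const_mul A
    simpa [div_eq_mul_inv, mul_comm] using h
  have hbound := (hasDerivAt_iff_isLittleO.1 hderiv).bound (half_pos hε)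
  filter_upwards [hbound.filter_mono nhdsWithin_le_nhds, self_mem_nhdsWithin] with d hd hne
  simp only [sub_zero, one_pow, div_one, smul_eq_mul, Real.norm_eq_abs] at hd
  have : 0 < |d| := abs_pos.2 hne
  nlinarith [le_abs_self (A / (1 - d) ^ p - A - d * (p * A))]

theorem tendsto_tsum_gibbs_deviation (hp : p ≠ 0)
    (hF : ∀ r > 0, HasSum (fun i => Real.exp (-(r * X i))) (Real.exp (F r)))
    (hA : Tendsto (fun r => r ^ p * F r) (𝓝[>] 0) (𝓝 A)) (hε : 0 < ε) :
    Tendsto (fun r => ∑' i, if ε < |r ^ (p + 1) * X i - p * A| then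
      Real.exp (-(r * X i)) * Real.exp (-F r) else 0) (𝓝[>] 0) (𝓝 0) := by
  have hrate := eventually_div_one_sub_pow_sub_lt A p hε
  have hneg : Tendsto (fun d : ℝ => -d) (𝓝[>] 0) (𝓝[≠] 0) := by
    have h := tendsto_neg_nhdsGT (a := (0 : ℝ))
    rw [neg_zero] at h
    exact h.mono_right (nhdsLT_le_nhdsNE 0)
  obtain ⟨δ, ⟨hδ0, hδ1⟩, hδ, hδ'⟩ := ((eventually_mem_set.2 (Ioo_mem_nhdsGT one_pos)).and <|
    (hrate.filter_mono (nhdsGT_le_nhdsNE 0)).and (hneg.eventually hrate)).exists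
  have hbound := (tendsto_exp_tilted_free_energy hp hA hδ1 hδ).add
    (tendsto_exp_tilted_free_energy hp hA (by linarith) hδ')
  rw [add_zero] at hbound
  refine squeeze_zero' (.of_forall fun r => tsum_nonneg fun i => ite_nonneg (by positivity) le_rfl)
    (eventually_mem_nhdsWithin.mono fun r (hr : 0 < r) => ?_) hbound
  rw [abs_neg, abs_of_pos hδ0, ← mul_add]
  refine tsum_ite_lt_abs_le_exp_mul (by positivity) (fun i => by positivity)
    (hasSum_gibbs_mul_exp hF hr hδ1) ?_
  rw [← neg_div]
  exact hasSum_gibbs_mul_exp hF hr (by linarith)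

end Concentration

lemma tendsto_neg_log_nhdsLT_one : Tendsto (fun q => -Real.log q) (𝓝[<] 1) (𝓝[>] 0) := by
  have hlog := (Real.continuousAt_log one_ne_zero).neg.tendsto
  rw [Pi.neg_apply, Real.log_one, neg_zero] at hlog
  refine tendsto_nhdsWithin_iff.2 ⟨hlog.mono_left nhdsWithin_le_nhds, ?_⟩
  filter_upwards [Ioo_mem_nhdsLT zero_lt_one] with q hq
  exact neg_pos.2 (Real.log_neg hq.1 hq.2)

lemma hasSum_exp_neg_mul_size {r : ℝ} (hr : 0 < r) :
    HasSum (fun π : PlanePartition => Real.exp (-(r * π.size)))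
      (Real.exp (logMacMahon (Real.exp (-r)))) := by
  refine (hasSum_pow_size (Real.exp_pos (-r)).le
    (Real.exp_lt_one_iff.2 (neg_neg_iff_pos.2 hr))).congr_fun fun π => ?_
  rw [← Real.exp_nat_mul, mul_neg, mul_comm]

/-- As `q → 1⁻`, `(-ln q)³ |π| → 2ζ(3)` in probability under `P_3D,q`: for
every `ε > 0`, the `P_3D,q`-probability of `|(-ln q)³ |π| - 2ζ(3)| > ε` tends
to `0`. -/
theorem volume_times_r_cubed_tendsto_two_zeta_three_in_probability
    (ε : ℝ) (hε : 0 < ε) :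
    Tendsto
      (fun q : ℝ =>
        ∑' π : PlanePartition,
          if ε < |(-Real.log q) ^ 3 * (π.size : ℝ) -
              2 * ∑' n : ℕ, ((n : ℝ) + 1)⁻¹ ^ 3|
          then q ^ π.size * ∏' n : ℕ, (1 - q ^ (n + 1)) ^ (n + 1) else 0)
      (𝓝[<] 1) (𝓝 0) := by
  have hgibbs := tendsto_tsum_gibbs_deviation two_ne_zero
    (fun r hr => hasSum_exp_neg_mul_size hr) tendsto_sq_mul_logMacMahon_exp_neg hε
  refine (hgibbs.comp tendsto_neg_log_nhdsLT_one).congr' ?_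
  filter_upwards [Ioo_mem_nhdsLT zero_lt_one] with q ⟨hq0, hq1⟩
  refine tsum_congr fun π => ?_
  have hpow : Real.exp (-(-Real.log q * π.size)) = q ^ π.size := by
    rw [neg_mul, neg_neg, mul_comm, Real.exp_nat_mul, Real.exp_log hq0]
  rw [hpow, neg_neg, Real.exp_log hq0, tprod_one_sub_pow hq0.le hq1, Nat.cast_ofNat]
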